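/- Proposition 5 (FDMA, finite peak power). Consider Problem (P2) in energy variables with peak power P_peak > 0. Let (α₀, α₁, x, s₀, {s_{k,n}}, {m_{k,n}}) be any feasible point with 0 < α₀, 0 < s₀ < α₀ P_peak (i.e., WPT power p₀ = s₀/α₀ strictly below P_peak). Set α̃₀ = s₀/P_peak and α̃₁ = 1 − α̃₀ ≥ α₁. Then the point (α̃₀, α̃₁, x, s₀, {s_{k,n}}, {m_{k,n}}) is feasible, satisfies s₀ = α̃₀ P_peak (i.e., WPT power equal to P_peak), and its sum-rate is greater than or equal to the sum-rate of the original point. Hence the maximum sum-rate of Problem (P2) is achieved with p₀* = P_peak. -/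

import Mathlib

open Finset

/-- Rate of pair `k` on a subcarrier in Problem (P2) (FDMA, energy variables), over `N`
subcarriers: WIT time fraction `a₁`, source energy `mkn` (first-hop gain `h1kn`),
relay energy `skn` (second-hop gain `h2kn`), noise power `σ²`; the rate is `0` when
`a₁ = 0`. -/
noncomputable def fdmaRate (N : ℕ) (σ a₁ mkn h1kn skn h2kn : ℝ) : ℝ :=
  if a₁ = 0 then 0
  else (a₁ / (2 * N)) * min (Real.logb 2 (1 + 2 * mkn * h1kn / (a₁ * σ ^ 2)))
                            (Real.logb 2 (1 + 2 * skn * h2kn / (a₁ * σ ^ 2)))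

/-!
With all energies fixed, the signal-to-noise ratio of each hop is inversely proportional to the WIT
time fraction `α₁`. Each hop therefore contributes a perspective `t * f (c / t)`, at `t = α₁`, of
the nonnegative concave function `f y = log₂ (1 + y)`, and such a perspective increases with `t`:
more time for the same energy never hurts. Sending the energy `s₀` at peak power takes the least
possible time and leaves the rest of the frame to `α₁`.
-/

section Perspective

theorem smul_inv_smul_le_of_concaveOn {𝕜 E β : Type*} [Field 𝕜] [LinearOrder 𝕜]
    [IsStrictOrderedRing 𝕜] [AddCommMonoid E] [Module 𝕜 E] [AddCommMonoid β] [PartialOrder β]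
    [IsOrderedAddMonoid β] [Module 𝕜 β] [PosSMulMono 𝕜 β] {S : Set E} {f : E → β}
    (hf : ConcaveOn 𝕜 S f) (h0S : 0 ∈ S) (hf0 : 0 ≤ f 0) {a b : 𝕜} (ha : 0 < a) (hab : a ≤ b)
    {x : E} (hx : a⁻¹ • x ∈ S) :
    a • f (a⁻¹ • x) ≤ b • f (b⁻¹ • x) := by
  have hb : 0 < b := ha.trans_le hab
  have hw : 0 ≤ 1 - a / b := sub_nonneg.2 ((div_le_one hb).2 hab)
  have hcomb : (a / b) • a⁻¹ • x + (1 - a / b) • (0 : E) = b⁻¹ • x := by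
    rw [smul_zero, add_zero, smul_smul]
    congr 1
    field_simp
  calc a • f (a⁻¹ • x) = b • (a / b) • f (a⁻¹ • x) := by rw [smul_smul, mul_div_cancel₀ a hb.ne']
    _ ≤ b • ((a / b) • f (a⁻¹ • x) + (1 - a / b) • f 0) :=
        smul_le_smul_of_nonneg_left (le_add_of_nonneg_right (smul_nonneg hw hf0)) hb.le
    _ ≤ b • f (b⁻¹ • x) := by
        rw [← hcomb]
        exact smul_le_smul_of_nonneg_left
          (hf.2 hx h0S (div_nonneg ha.le hb.le) hw (add_sub_cancel _ _)) hb.le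

theorem concaveOn_logb_one_add {b : ℝ} (hb : 1 < b) :
    ConcaveOn ℝ (Set.Ioi (-1)) fun x ↦ Real.logb b (1 + x) := by
  have hlog : ConcaveOn ℝ (Set.Ioi (-1)) fun x ↦ Real.log (1 + x) := by
    simpa [Function.comp_def] using strictConcaveOn_log_Ioi.concaveOn.translate_right 1
  simpa only [Real.logb, smul_eq_mul, div_eq_inv_mul] using
    hlog.smul (inv_nonneg.2 (Real.log_nonneg hb.le))

theorem monotoneOn_mul_logb_one_add_div {b c : ℝ} (hb : 1 < b) (hc : 0 ≤ c) :
    MonotoneOn (fun t ↦ t * Real.logb b (1 + c / t)) (Set.Ici 0) := by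
  intro t (ht : 0 ≤ t) u (hu : 0 ≤ u) htu
  obtain rfl | ht := ht.eq_or_lt
  · simpa only [zero_mul] using
      mul_nonneg hu (Real.logb_nonneg hb (le_add_of_nonneg_right (div_nonneg hc hu)))
  · have hmem : t⁻¹ • c ∈ Set.Ioi (-1) :=
      neg_one_lt_zero.trans_le (smul_nonneg (inv_nonneg.2 ht.le) hc)
    simpa only [smul_eq_mul, div_eq_inv_mul] using
      smul_inv_smul_le_of_concaveOn (concaveOn_logb_one_add hb) (Set.mem_Ioi.2 neg_one_lt_zero)
        (by simp) ht htu hmem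

end Perspective

section Rate

variable (N : ℕ) (σ : ℝ) {t m h s g : ℝ}

-- At `t = 0` the right-hand side vanishes, in agreement with the value assigned to the rate.
theorem fdmaRate_eq_mul_min (ht : 0 ≤ t) :
    fdmaRate N σ t m h s g =
      1 / (2 * N) * min (t * Real.logb 2 (1 + 2 * (m * h) / σ ^ 2 / t))
        (t * Real.logb 2 (1 + 2 * (s * g) / σ ^ 2 / t)) := by
  have hsnr (y z : ℝ) : 2 * y * z / (t * σ ^ 2) = 2 * (y * z) / σ ^ 2 / t := by
    rw [mul_assoc, div_div, mul_comm t]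
  obtain rfl | hpos := ht.eq_or_lt
  · simp [fdmaRate]
  · rw [fdmaRate, if_neg hpos.ne', hsnr, hsnr, ← mul_min_of_nonneg _ _ ht]
    ring

theorem monotoneOn_fdmaRate (hmh : 0 ≤ m * h) (hsg : 0 ≤ s * g) :
    MonotoneOn (fun t ↦ fdmaRate N σ t m h s g) (Set.Ici 0) := by
  have hop {c : ℝ} (hc : 0 ≤ c) :
      MonotoneOn (fun t ↦ t * Real.logb 2 (1 + 2 * c / σ ^ 2 / t)) (Set.Ici 0) :=
    monotoneOn_mul_logb_one_add_div one_lt_two (by positivity)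
  intro t ht u hu htu
  simp only [fdmaRate_eq_mul_min N σ ht, fdmaRate_eq_mul_min N σ hu]
  exact mul_le_mul_of_nonneg_left (min_le_min (hop hmh ht hu htu) (hop hsg ht hu htu))
    (by positivity)

end Rate

theorem stmt_13_general {K N : ℕ} {σ Ppeak : ℝ} (_hσ : σ ≠ 0) (hPpeak : 0 < Ppeak)
    {h1 h2 : Fin K → Fin N → ℝ} (hh1 : ∀ k n, 0 ≤ h1 k n) (hh2 : ∀ k n, 0 ≤ h2 k n)
    {α₀ α₁ s₀ : ℝ} {x s m : Fin K → Fin N → ℝ} (hα₁ : 0 ≤ α₁) (htime : α₀ + α₁ ≤ 1)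
    (hx : ∀ k n, 0 ≤ x k n) (hs₀ : 0 < s₀) (hs : ∀ k n, 0 ≤ s k n)
    (hs₀peak : s₀ ≤ α₀ * Ppeak) (hspeak : ∀ k n, s k n ≤ (α₁ / 2) * Ppeak)
    (hm : ∀ k n, 0 ≤ m k n) :
    let α₀' : ℝ := s₀ / Ppeak
    let α₁' : ℝ := 1 - α₀'
    α₁ ≤ α₁' ∧ 0 < α₀' ∧ s₀ = α₀' * Ppeak ∧ α₀' + α₁' ≤ 1 ∧
    (∀ k n, s k n ≤ (α₁' / 2) * Ppeak) ∧
    (∑ k, ∑ n, x k n * fdmaRate N σ α₁ (m k n) (h1 k n) (s k n) (h2 k n)) ≤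
      ∑ k, ∑ n, x k n * fdmaRate N σ α₁' (m k n) (h1 k n) (s k n) (h2 k n) := by
  intro α₀' α₁'
  have hα₀' : α₀' ≤ α₀ := (div_le_iff₀ hPpeak).2 hs₀peak
  have hα₁' : α₁ ≤ α₁' := by linarith [show α₁' = 1 - α₀' from rfl]
  have hpeak (k n) : s k n ≤ (α₁' / 2) * Ppeak := (hspeak k n).trans (by gcongr)
  have hrate (k n) : fdmaRate N σ α₁ (m k n) (h1 k n) (s k n) (h2 k n) ≤
      fdmaRate N σ α₁' (m k n) (h1 k n) (s k n) (h2 k n) :=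
    monotoneOn_fdmaRate N σ (mul_nonneg (hm k n) (hh1 k n)) (mul_nonneg (hs k n) (hh2 k n))
      hα₁ (hα₁.trans hα₁') hα₁'
  exact ⟨hα₁', div_pos hs₀ hPpeak, (div_mul_cancel₀ s₀ hPpeak.ne').symm,
    (add_sub_cancel α₀' 1).le, hpeak,
    sum_le_sum fun k _ ↦ sum_le_sum fun n _ ↦ mul_le_mul_of_nonneg_left (hrate k n) (hx k n)⟩

/-- Proposition 5 (FDMA, finite peak power).  For any feasible point of Problem (P2) with
peak power `P_peak` such that `0 < α₀` and `0 < s₀ < α₀ P_peak`, setting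
`α̃₀ = s₀/P_peak` and `α̃₁ = 1 − α̃₀ ≥ α₁`, the point `(α̃₀, α̃₁, x, s₀, s, m)` is
feasible, uses WPT power exactly `P_peak` (i.e. `s₀ = α̃₀ P_peak`), and its sum-rate is
at least the original one; hence the maximum sum-rate is achieved with `p₀* = P_peak`. -/
theorem stmt_13
    (K N : ℕ) (hK : 1 ≤ K) (hN : 1 ≤ N)
    (σ η P Ppeak : ℝ) (hσ : 0 < σ) (hη0 : 0 < η) (hη1 : η < 1)
    (hP : 0 < P) (hPpeak : 0 < Ppeak)
    (gr : Fin K → ℝ) (hgr : ∀ k, 0 < gr k)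
    (h1 h2 : Fin K → Fin N → ℝ) (hh1 : ∀ k n, 0 < h1 k n) (hh2 : ∀ k n, 0 < h2 k n)
    (Ec : Fin K → ℝ) (hEc : ∀ k, 0 ≤ Ec k)
    -- a feasible point of Problem (P2) with peak power constraints
    (α₀ α₁ : ℝ) (x : Fin K → Fin N → ℝ) (s₀ : ℝ) (s m : Fin K → Fin N → ℝ)
    (hα₀pos : 0 < α₀) (hα₁nn : 0 ≤ α₁) (htime : α₀ + α₁ ≤ 1)
    (hx01 : ∀ k n, x k n = 0 ∨ x k n = 1) (hxsum : ∀ n, ∑ k, x k n ≤ 1)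
    (hs₀pos : 0 < s₀) (hs : ∀ k n, 0 ≤ s k n)
    (henergy : s₀ + ∑ k, ∑ n, s k n ≤ P)
    (hs₀peak : s₀ < α₀ * Ppeak) (hspeak : ∀ k n, s k n ≤ (α₁ / 2) * Ppeak)
    (hm : ∀ k n, 0 ≤ m k n)
    (hcaus : ∀ k, (∑ n, m k n) + Ec k ≤ η * s₀ * gr k) :
    let α₀' : ℝ := s₀ / Ppeak
    let α₁' : ℝ := 1 - α₀'
    -- the new point uses full peak power for WPT and is feasible
    α₁ ≤ α₁' ∧ 0 < α₀' ∧ s₀ = α₀' * Ppeak ∧ α₀' + α₁' ≤ 1 ∧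
    (∀ k n, s k n ≤ (α₁' / 2) * Ppeak) ∧
    -- the sum-rate does not decrease
    (∑ k, ∑ n, x k n * fdmaRate N σ α₁ (m k n) (h1 k n) (s k n) (h2 k n)) ≤
      ∑ k, ∑ n, x k n * fdmaRate N σ α₁' (m k n) (h1 k n) (s k n) (h2 k n) := by
  have hx (k n) : 0 ≤ x k n := by rcases hx01 k n with h | h <;> simp [h]
  exact stmt_13_general hσ.ne' hPpeak (fun k n ↦ (hh1 k n).le) (fun k n ↦ (hh2 k n).le) hα₁nn htime
    hx hs₀pos hs hs₀peak.le hspeak hm
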